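/- Let H ⊆ binom([n],3) be a 2-resilient 3-graph with matching number 2, and let A, B ∈ H be disjoint edges. Then the number of edges T ∈ H with T ∩ A ≠ ∅ and T ∩ B ≠ ∅ is at most 36. -/

import Mathlib

/-- The matching number of a hypergraph: the largest size of a set of
pairwise disjoint edges. -/
noncomputable def matchingNumber (H : Finset (Finset ℕ)) : ℕ :=
  sSup {m | ∃ M : Finset (Finset ℕ), M ⊆ H ∧ M.card = m ∧
    (M : Set (Finset ℕ)).PairwiseDisjoint id}

/-- A hypergraph is `t`-resilient if deleting any set of at most `t`
vertices does not decrease its matching number. -/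
def Resilient (t : ℕ) (H : Finset (Finset ℕ)) : Prop :=
  ∀ T : Finset ℕ, T.card ≤ t →
    matchingNumber (H.filter fun F => Disjoint F T) = matchingNumber H

/-- `S 0, …, S (r-1)` form a pseudo sunflower with center `C`:
the `S i` are distinct, `C` is a proper subset of one of them, and the
sets `S i \ C` are pairwise disjoint. -/
def IsPseudoSunflower {r : ℕ} (S : Fin r → Finset ℕ) (C : Finset ℕ) : Prop :=
  Function.Injective S ∧ (∃ i, C ⊂ S i) ∧
    ∀ i j, i ≠ j → Disjoint (S i \ C) (S j \ C)

/-- The covering (transversal) number of a hypergraph. -/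
noncomputable def coverNumber (H : Finset (Finset ℕ)) : ℕ :=
  sInf {m | ∃ Y : Finset ℕ, Y.card = m ∧ ∀ F ∈ H, (F ∩ Y).Nonempty}

theorem mn_bdd (H : Finset (Finset ℕ)) : BddAbove {m | ∃ M : Finset (Finset ℕ), M ⊆ H ∧ M.card = m ∧
    (M : Set (Finset ℕ)).PairwiseDisjoint id} := by
  refine ⟨H.card, ?_⟩
  rintro m ⟨M, hM, rfl, -⟩
  exact Finset.card_le_card hM

theorem mn_two (H : Finset (Finset ℕ)) (h : matchingNumber H = 2) :
    ∃ E ∈ H, ∃ F ∈ H, Disjoint E F := by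
  have hm := Nat.sSup_mem (s := {m | ∃ M : Finset (Finset ℕ), M ⊆ H ∧ M.card = m ∧
    (M : Set (Finset ℕ)).PairwiseDisjoint id}) ⟨0, ∅, by simp⟩ (mn_bdd H)
  obtain ⟨M, hM, hc, hd⟩ := hm
  have hc2 : M.card = 2 := hc.trans h
  obtain ⟨E, F, hEF, rfl⟩ := Finset.card_eq_two.1 hc2
  exact ⟨E, hM (by simp), F, hM (by simp), hd (by simp) (by simp) hEF⟩

theorem mn_no3 (H : Finset (Finset ℕ)) (h : matchingNumber H = 2)
    (h3 : ∀ E ∈ H, E.card = 3) (E F G : Finset ℕ) (hE : E ∈ H) (hF : F ∈ H) (hG : G ∈ H)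
    (h1 : Disjoint E F) (h2 : Disjoint E G) (h4 : Disjoint F G) : False := by
  have ne : ∀ E ∈ H, ∀ F ∈ H, Disjoint E F → E ≠ F := by
    intro E hE F _ hd he
    subst he
    have := h3 E hE
    simp_all
  have : 3 ≤ matchingNumber H := by
    apply le_csSup (mn_bdd H)
    refine ⟨{E, F, G}, ?_, ?_, ?_⟩
    · intro x hx
      simp at hx
      rcases hx with rfl | rfl | rfl <;> assumption
    · exact Finset.card_eq_three.2 ⟨E, F, G, ne E hE F hF h1, ne E hE G hG h2, ne F hF G hG h4, rfl⟩
    · intro x hx y hy hxy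
      simp at hx hy
      rcases hx with rfl | rfl | rfl <;> rcases hy with rfl | rfl | rfl <;>
        first
        | exact absurd rfl hxy
        | assumption
        | (apply Disjoint.symm; assumption)
  omega

theorem sdr_aux (X Y Z : Finset ℕ) (h : ∀ x ∈ X, ∀ y ∈ Y, ∀ z ∈ Z, x = y ∨ y = z ∨ x = z)
    (hX : 0 < X.card) (hY : 0 < Y.card) (hZ : 3 ≤ Z.card) : X.card ≤ 1 ∧ Y.card ≤ 1 := by
  have key : ∀ x ∈ X, ∀ y ∈ Y, x = y := by
    intro x hx y hy
    by_contra hne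
    have : ∃ z ∈ Z, z ∉ ({x, y} : Finset ℕ) := by
      apply Finset.exists_mem_notMem_of_card_lt_card
      have := Finset.card_le_two (a := x) (b := y)
      omega
    obtain ⟨z, hz, hn⟩ := this
    simp at hn
    have := h x hx y hy z hz
    grind
  obtain ⟨x, hx⟩ := Finset.card_pos.1 hX
  obtain ⟨y, hy⟩ := Finset.card_pos.1 hY
  constructor
  · exact Finset.card_le_one.2 fun u hu v hv => (key u hu y hy).trans (key v hv y hy).symm
  · exact Finset.card_le_one.2 fun u hu v hv => (key x hx u hu).symm.trans (key x hx v hv)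

def nbO (n : ℕ) (H : Finset (Finset ℕ)) (U : Finset ℕ) (a b : ℕ) : Finset ℕ :=
  (Finset.range n).filter fun x => {a, b, x} ∈ H ∧ x ∉ U
def nbI (n : ℕ) (H : Finset (Finset ℕ)) (U : Finset ℕ) (a b : ℕ) : Finset ℕ :=
  (Finset.range n).filter fun x => ({a, b, x} ∈ H ∧ x ≠ a ∧ x ≠ b) ∧ x ∈ U

theorem pair_bound (n : ℕ) (H : Finset (Finset ℕ)) (h3 : ∀ E ∈ H, E.card = 3)
    (hres : Resilient 2 H) (hν : matchingNumber H = 2)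
    (A B : Finset ℕ) (hA : A ∈ H) (hB : B ∈ H) (hAB : Disjoint A B)
    (a b : ℕ) (ha : a ∈ A) (hb : b ∈ B) :
    (nbO n H (A ∪ B) a b).card ≤ 4 ∧ (nbI n H (A ∪ B) a b).card ≤ 4 ∧
    (nbO n H (A ∪ B) a b).card + (nbI n H (A ∪ B) a b).card ≤ 6 := by
  have hab : a ≠ b := fun h => Finset.disjoint_left.1 hAB ha (h ▸ hb)
  obtain ⟨E, hE, F, hF, hEF⟩ := mn_two _ ((hres {a, b} Finset.card_le_two).trans hν)
  simp only [Finset.mem_filter, Finset.disjoint_insert_right, Finset.disjoint_singleton_right] at hE hF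
  obtain ⟨hE, haE, hbE⟩ := hE
  obtain ⟨hF, haF, hbF⟩ := hF
  have hU : (A ∪ B).card = 6 := by
    rw [Finset.card_union_of_disjoint hAB, h3 A hA, h3 B hB]
  have hD : (E ∪ F).card = 6 := by
    rw [Finset.card_union_of_disjoint hEF, h3 E hE, h3 F hF]
  have meet : ∀ E ∈ H, ∃ x ∈ E, x ∈ A ∪ B := by
    intro E hE
    by_contra! hc
    refine mn_no3 H hν h3 E A B hE hA hB ?_ ?_ hAB <;> rw [Finset.disjoint_left] <;> grind
  have inD : ∀ x, {a, b, x} ∈ H → x ∈ E ∪ F := by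
    intro x hx
    by_contra hc
    refine mn_no3 H hν h3 {a, b, x} E F hx hE hF ?_ ?_ hEF <;> rw [Finset.disjoint_left] <;> grind
  have h1 : (nbO n H (A ∪ B) a b) ⊆ (E ∪ F) \ (A ∪ B) := by
    intro x hx
    simp only [nbO, Finset.mem_filter] at hx
    exact Finset.mem_sdiff.2 ⟨inD x hx.2.1, hx.2.2⟩
  have h2 : (nbI n H (A ∪ B) a b) ⊆ (E ∪ F) ∩ (A ∪ B) := by
    intro x hx
    simp only [nbI, Finset.mem_filter] at hx
    exact Finset.mem_inter.2 ⟨inD x hx.2.1.1, hx.2.2⟩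
  have h4 : (nbI n H (A ∪ B) a b) ⊆ (A ∪ B) \ {a, b} := by
    intro x hx
    simp only [nbI, Finset.mem_filter] at hx
    simp only [Finset.mem_sdiff, Finset.mem_insert, Finset.mem_singleton]
    tauto
  have h5 : ((A ∪ B) \ {a, b}).card = 4 := by
    rw [Finset.card_sdiff_of_subset (by intro x; grind), hU, Finset.card_pair hab]
  have h6 : 2 ≤ ((E ∪ F) ∩ (A ∪ B)).card := by
    obtain ⟨x, hx, hx'⟩ := meet E hE
    obtain ⟨y, hy, hy'⟩ := meet F hF
    have hxy : x ≠ y := fun h => Finset.disjoint_left.1 hEF hx (h ▸ hy)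
    rw [← Finset.card_pair hxy]
    apply Finset.card_le_card
    intro z; grind
  have h7 := Finset.card_sdiff_add_card_inter (E ∪ F) (A ∪ B)
  have := Finset.card_le_card h1
  have := Finset.card_le_card h2
  have := Finset.card_le_card h4
  omega

theorem match_bound (n : ℕ) (H : Finset (Finset ℕ)) (h3 : ∀ E ∈ H, E.card = 3)
    (hres : Resilient 2 H) (hν : matchingNumber H = 2)
    (A B : Finset ℕ) (hA : A ∈ H) (hB : B ∈ H) (hAB : Disjoint A B)
    (a b a' b' a'' b'' : ℕ) (ha : a ∈ A) (hb : b ∈ B) (ha' : a' ∈ A) (hb' : b' ∈ B)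
    (ha'' : a'' ∈ A) (hb'' : b'' ∈ B) (n1 : a ≠ a') (n2 : a ≠ a'') (n3 : a' ≠ a'')
    (m1 : b ≠ b') (m2 : b ≠ b'') (m3 : b' ≠ b'') :
    (2 * (nbO n H (A ∪ B) a b).card + (nbI n H (A ∪ B) a b).card) +
    (2 * (nbO n H (A ∪ B) a' b').card + (nbI n H (A ∪ B) a' b').card) +
    (2 * (nbO n H (A ∪ B) a'' b'').card + (nbI n H (A ∪ B) a'' b'').card) ≤ 24 := by
  have p1 := pair_bound n H h3 hres hν A B hA hB hAB a b ha hb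
  have p2 := pair_bound n H h3 hres hν A B hA hB hAB a' b' ha' hb'
  have p3 := pair_bound n H h3 hres hν A B hA hB hAB a'' b'' ha'' hb''
  have hs : ∀ x ∈ nbO n H (A ∪ B) a b, ∀ y ∈ nbO n H (A ∪ B) a' b', ∀ z ∈ nbO n H (A ∪ B) a'' b'',
      x = y ∨ y = z ∨ x = z := by
    intro x hx y hy z hz
    by_contra! hc
    obtain ⟨c1, c2, c3⟩ := hc
    simp only [nbO, Finset.mem_filter] at hx hy hz
    have hd := Finset.disjoint_left.1 hAB
    have dis : ∀ a b x a' b' y, a ∈ A → b ∈ B → a' ∈ A → b' ∈ B → x ∉ A ∪ B → y ∉ A ∪ B → a ≠ a' →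
        b ≠ b' → x ≠ y → Disjoint ({a, b, x} : Finset ℕ) {a', b', y} := by
      intro a b x a' b' y ha hb ha' hb' hx hy _ _ _
      rw [Finset.disjoint_left]
      intro z hz hz'
      simp only [Finset.mem_union, not_or] at hx hy
      simp only [Finset.mem_insert, Finset.mem_singleton] at hz hz'
      rcases hz with rfl | rfl | rfl <;> rcases hz' with rfl | rfl | rfl <;> simp_all
    exact mn_no3 H hν h3 _ _ _ hx.2.1 hy.2.1 hz.2.1
      (dis _ _ _ _ _ _ ha hb ha' hb' hx.2.2 hy.2.2 n1 m1 c1)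
      (dis _ _ _ _ _ _ ha hb ha'' hb'' hx.2.2 hz.2.2 n2 m2 c3)
      (dis _ _ _ _ _ _ ha' hb' ha'' hb'' hy.2.2 hz.2.2 n3 m3 c2)
  have s1 := sdr_aux _ _ _ hs
  have s2 := sdr_aux _ _ _ (fun x hx z hz y hy => by have := hs x hx y hy z hz; tauto :
    ∀ x ∈ nbO n H (A ∪ B) a b, ∀ z ∈ nbO n H (A ∪ B) a'' b'', ∀ y ∈ nbO n H (A ∪ B) a' b',
      x = z ∨ z = y ∨ x = y)
  have s3 := sdr_aux _ _ _ (fun y hy z hz x hx => by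
      have := hs x hx y hy z hz
      rcases this with h | h | h <;> simp [h] :
    ∀ y ∈ nbO n H (A ∪ B) a' b', ∀ z ∈ nbO n H (A ∪ B) a'' b'', ∀ x ∈ nbO n H (A ∪ B) a b,
      y = z ∨ z = x ∨ y = x)
  omega

theorem pair_count (n : ℕ) (H : Finset (Finset ℕ)) (hH : H ⊆ (Finset.range n).powersetCard 3)
    (U : Finset ℕ) (a b : ℕ) (hab : a ≠ b) (ha : a ∈ U) (hb : b ∈ U) :
    ∑ T ∈ H, (if a ∈ T ∧ b ∈ T then (if T ⊆ U then 1 else 2) else 0) ≤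
      2 * (nbO n H U a b).card + (nbI n H U a b).card := by
  have ex : ∀ T ∈ H, a ∈ T → b ∈ T → ∃ x ∈ Finset.range n, x ≠ a ∧ x ≠ b ∧ T = {a, b, x} := by
    intro T hT haT hbT
    obtain ⟨hs, hc⟩ := Finset.mem_powersetCard.1 (hH hT)
    have hsub : ({a, b} : Finset ℕ) ⊆ T := by intro x; grind
    have h1 : (T \ {a, b}).card = 1 := by
      rw [Finset.card_sdiff_of_subset hsub, hc, Finset.card_pair hab]
    obtain ⟨x, hx⟩ := Finset.card_eq_one.1 h1
    have hxT : x ∈ T \ {a, b} := by rw [hx]; simp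
    refine ⟨x, hs (Finset.mem_sdiff.1 hxT).1, by grind, by grind, ?_⟩
    ext z
    have : z ∈ T \ {a, b} ↔ z = x := by rw [hx]; simp
    grind
  have hO : (H.filter fun T => (a ∈ T ∧ b ∈ T) ∧ ¬ T ⊆ U).card ≤ (nbO n H U a b).card := by
    refine (Finset.card_le_card (t := (nbO n H U a b).image fun x => {a, b, x}) ?_).trans
      Finset.card_image_le
    intro T hT
    simp only [Finset.mem_filter] at hT
    obtain ⟨x, hx, hxa, hxb, rfl⟩ := ex T hT.1 hT.2.1.1 hT.2.1.2
    refine Finset.mem_image.2 ⟨x, ?_, rfl⟩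
    simp only [nbO, Finset.mem_filter]
    refine ⟨hx, hT.1, fun h => hT.2.2 ?_⟩
    intro z; grind
  have hI : (H.filter fun T => (a ∈ T ∧ b ∈ T) ∧ T ⊆ U).card ≤ (nbI n H U a b).card := by
    refine (Finset.card_le_card (t := (nbI n H U a b).image fun x => {a, b, x}) ?_).trans
      Finset.card_image_le
    intro T hT
    simp only [Finset.mem_filter] at hT
    obtain ⟨x, hx, hxa, hxb, rfl⟩ := ex T hT.1 hT.2.1.1 hT.2.1.2
    refine Finset.mem_image.2 ⟨x, ?_, rfl⟩
    simp only [nbI, Finset.mem_filter]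
    exact ⟨hx, ⟨hT.1, hxa, hxb⟩, hT.2.2 (by simp)⟩
  refine le_trans (le_of_eq ?_) (Nat.add_le_add (Nat.mul_le_mul_left 2 hO) hI)
  rw [Finset.card_filter, Finset.card_filter, Finset.mul_sum, ← Finset.sum_add_distrib]
  refine Finset.sum_congr rfl fun T _ => ?_
  by_cases h1 : a ∈ T ∧ b ∈ T <;> by_cases h2 : T ⊆ U <;> simp [h1, h2]

theorem edge_weight (A B T : Finset ℕ) (hAB : Disjoint A B) (hT : T.card = 3)
    (h1 : (T ∩ A).Nonempty) (h2 : (T ∩ B).Nonempty) :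
    2 ≤ ∑ a ∈ A, ∑ b ∈ B, (if a ∈ T ∧ b ∈ T then (if T ⊆ A ∪ B then 1 else 2) else 0) := by
  have e : ∑ a ∈ A, ∑ b ∈ B, (if a ∈ T ∧ b ∈ T then (if T ⊆ A ∪ B then 1 else 2) else 0)
      = (T ∩ A).card * (T ∩ B).card * (if T ⊆ A ∪ B then 1 else 2) := by
    rw [← Finset.sum_product', ← Finset.sum_filter, Finset.sum_const, smul_eq_mul]
    congr 1
    rw [← Finset.card_product]
    congr 1
    ext ⟨x, y⟩
    simp only [Finset.mem_filter, Finset.mem_product, Finset.mem_inter]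
    tauto
  rw [e]
  have p1 := Finset.card_pos.2 h1
  have p2 := Finset.card_pos.2 h2
  split_ifs with hs
  · have : (T ∩ A).card + (T ∩ B).card = 3 := by
      rw [← Finset.card_union_of_disjoint
        (hAB.mono Finset.inter_subset_right Finset.inter_subset_right),
        ← Finset.inter_union_distrib_left, Finset.inter_eq_left.2 hs, hT]
    nlinarith
  · have := Nat.mul_pos p1 p2
    omega

theorem stmt11 (n : ℕ) (H : Finset (Finset ℕ))
    (hH : H ⊆ (Finset.range n).powersetCard 3)
    (hres : Resilient 2 H) (hν : matchingNumber H = 2)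
    (A B : Finset ℕ) (hA : A ∈ H) (hB : B ∈ H) (hAB : Disjoint A B) :
    (H.filter fun T => (T ∩ A).Nonempty ∧ (T ∩ B).Nonempty).card ≤ 36 := by
  have h3 : ∀ E ∈ H, E.card = 3 := fun E hE => (Finset.mem_powersetCard.1 (hH hE)).2
  have step1 : (H.filter fun T => (T ∩ A).Nonempty ∧ (T ∩ B).Nonempty).card * 2 ≤
      ∑ T ∈ H, ∑ a ∈ A, ∑ b ∈ B,
        (if a ∈ T ∧ b ∈ T then (if T ⊆ A ∪ B then 1 else 2) else 0) := by
    rw [← smul_eq_mul]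
    refine (Finset.card_nsmul_le_sum _ _ 2 ?_).trans
      (Finset.sum_le_sum_of_subset (Finset.filter_subset _ _))
    intro T hT
    simp only [Finset.mem_filter] at hT
    exact edge_weight A B T hAB (h3 T hT.1) hT.2.1 hT.2.2
  have step2 : ∑ T ∈ H, ∑ a ∈ A, ∑ b ∈ B,
        (if a ∈ T ∧ b ∈ T then (if T ⊆ A ∪ B then 1 else 2) else 0) ≤
      ∑ a ∈ A, ∑ b ∈ B, (2 * (nbO n H (A ∪ B) a b).card + (nbI n H (A ∪ B) a b).card) := by
    rw [Finset.sum_comm]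
    refine Finset.sum_le_sum fun a ha => ?_
    rw [Finset.sum_comm]
    refine Finset.sum_le_sum fun b hb => ?_
    exact pair_count n H hH (A ∪ B) a b (fun h => Finset.disjoint_left.1 hAB ha (h ▸ hb))
      (Finset.mem_union_left _ ha) (Finset.mem_union_right _ hb)
  have mb := match_bound n H h3 hres hν A B hA hB hAB
  have step3 : ∑ a ∈ A, ∑ b ∈ B,
      (2 * (nbO n H (A ∪ B) a b).card + (nbI n H (A ∪ B) a b).card) ≤ 72 := by
    generalize hf : (fun a b => 2 * (nbO n H (A ∪ B) a b).card + (nbI n H (A ∪ B) a b).card) = f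
    have hf' : ∀ a b, 2 * (nbO n H (A ∪ B) a b).card + (nbI n H (A ∪ B) a b).card = f a b := by
      intro a b; rw [← hf]
    simp only [hf'] at mb ⊢
    obtain ⟨a, a', a'', n1, n2, n3, hAe⟩ := Finset.card_eq_three.1 (h3 A hA)
    obtain ⟨b, b', b'', m1, m2, m3, hBe⟩ := Finset.card_eq_three.1 (h3 B hB)
    have ha : a ∈ A := by simp [hAe]
    have ha' : a' ∈ A := by simp [hAe]
    have ha'' : a'' ∈ A := by simp [hAe]
    have hb : b ∈ B := by simp [hBe]
    have hb' : b' ∈ B := by simp [hBe]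
    have hb'' : b'' ∈ B := by simp [hBe]
    have q1 := mb a b a' b' a'' b'' ha hb ha' hb' ha'' hb'' n1 n2 n3 m1 m2 m3
    have q2 := mb a b' a' b'' a'' b ha hb' ha' hb'' ha'' hb n1 n2 n3 m3 m1.symm m2.symm
    have q3 := mb a b'' a' b a'' b' ha hb'' ha' hb ha'' hb' n1 n2 n3 m2.symm m3.symm m1
    have es : ∀ g : ℕ → ℕ, ∑ x ∈ A, g x = g a + g a' + g a'' := by
      intro g
      rw [hAe, Finset.sum_insert (by simp [n1, n2]), Finset.sum_pair n3, add_assoc]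
    have et : ∀ g : ℕ → ℕ, ∑ x ∈ B, g x = g b + g b' + g b'' := by
      intro g
      rw [hBe, Finset.sum_insert (by simp [m1, m2]), Finset.sum_pair m3, add_assoc]
    simp only [es, et]
    omega
  omega
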